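/- arXiv:2205.12077 — 2 statements merged into one kernel-verified Lean document; each statement's English description precedes it below -/
import Mathlib

section
/- Assume λ > 0 and δ > 0, ρ > 0, and for each P > 0 let (β*(P), τ*(P)) be the unique saddle point of max_{β ≥ 0} min_{τ > 0} D(β,τ) with parameter P. Let s* = (√((δ − λ − 1)² + 4δλ) − δ + λ + 1)/(2δλ). Then, as P → ∞, τ*(P) converges to √ρ / √(δ − 1/(1 + λ·s*)²) and β*(P) converges to 2√ρ / (s*·√(δ − 1/(1 + λ·s*)²)). -/
open MeasureTheory ProbabilityTheory Filter

noncomputable section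

/-- Standard Gaussian `N(0,1)` measure on `ℝ`. -/
def stdGaussian : Measure ℝ := ProbabilityTheory.gaussianReal 0 1

/-- `Yfun P lam β τ = (β/α)·(E[(H − √P·α)²·1{H ≥ √P·α}] − 1/2)` with `α = 1/τ + 2λ/β`. -/
def Yfun (P lam β τ : ℝ) : ℝ :=
  (β / (1 / τ + 2 * lam / β)) *
    ((∫ h in Set.Ici (Real.sqrt P * (1 / τ + 2 * lam / β)),
        (h - Real.sqrt P * (1 / τ + 2 * lam / β)) ^ 2 ∂stdGaussian) - 1 / 2)

/-- `D(β,τ) = τβδ/2 + ρβ/(2τ) − β²/4 + Y(β,τ)`, with the convention `D(0,τ) = 0`. -/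
def Dfun (δ ρ P lam β τ : ℝ) : ℝ :=
  if β = 0 then 0
  else τ * β * δ / 2 + ρ * β / (2 * τ) - β ^ 2 / 4 + Yfun P lam β τ

/-- `(βs, τs)` is a saddle point of `max_{β ≥ 0} min_{τ > 0} D(β, τ)`:
`D(β,τs) ≤ D(βs,τs) ≤ D(βs,τ)` for all `β ≥ 0` and `τ > 0`. -/
def IsSaddle (δ ρ P lam βs τs : ℝ) : Prop :=
  0 ≤ βs ∧ 0 < τs ∧
  (∀ β, 0 ≤ β → Dfun δ ρ P lam β τs ≤ Dfun δ ρ P lam βs τs) ∧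
  (∀ τ, 0 < τ → Dfun δ ρ P lam βs τs ≤ Dfun δ ρ P lam βs τ)

end

/-!
Replacing the Gaussian tail term of `D` by `0` gives an elementary function `F` with
`F ≤ D ≤ F + O(β τ³ / P)`, the upper bound coming from a Markov-type fourth moment estimate. `F` has
the saddle point `(b, t)` with `b = 2 t / s`, where `δ = 1 / s + 1 / (1 + λ s)` and
`ρ = t² (δ - 1 / (1 + λ s)²)`, and it grows quadratically away from it. A saddle point `(β, τ)` of
`D` satisfies `F(b, τ) ≤ D(b, τ) ≤ D(β, τ) ≤ D(β, t) ≤ F(β, t) + O(β t³ / P)`, so the two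
nonnegative gaps `F(b, τ) - F(b, t)` and `F(b, t) - F(β, t)`, which dominate `(τ - t)² / τ` and
`(β - b)²` up to constants, add up to `O(β t³ / P)`.
-/

open Topology

theorem tendsto_of_sub_sq_le_mul_self {ι : Type*} {l : Filter ι} {x ε : ι → ℝ} {a : ℝ}
    (hε : Tendsto ε l (𝓝 0)) (h : ∀ᶠ i in l, (x i - a) ^ 2 ≤ ε i * x i) :
    Tendsto x l (𝓝 a) := by
  have hbound : Tendsto (fun i ↦ √(ε i ^ 2 + 2 * a * ε i)) l (𝓝 0) := by
    simpa using ((hε.pow 2).add (hε.const_mul (2 * a))).sqrt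
  rw [tendsto_iff_dist_tendsto_zero]
  refine squeeze_zero' (.of_forall fun _ ↦ dist_nonneg) ?_ hbound
  filter_upwards [h] with i hi
  rw [Real.dist_eq]
  apply Real.abs_le_sqrt
  linarith [sq_nonneg (x i - a - ε i)]

theorem sq_div_add_tangent_le {b c x : ℝ} (hb : 0 < b) (hc : 0 ≤ c) (hx : 0 ≤ x) :
    b ^ 2 / (b + c) + (1 - (c / (b + c)) ^ 2) * (x - b) ≤ x ^ 2 / (x + c) := by
  rcases (add_nonneg hx hc).eq_or_lt with hxc | hxc
  · obtain rfl : x = 0 := by linarith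
    obtain rfl : c = 0 := by linarith
    simp [sq, hb.ne']
  · have hgap : x ^ 2 / (x + c) - (b ^ 2 / (b + c) + (1 - (c / (b + c)) ^ 2) * (x - b)) =
        c ^ 2 * (x - b) ^ 2 / ((x + c) * (b + c) ^ 2) := by
      field_simp
      ring
    have : 0 ≤ c ^ 2 * (x - b) ^ 2 / ((x + c) * (b + c) ^ 2) := by positivity
    linarith

section Tail

theorem moment_abs_nonneg (n : ℕ) (μ : Measure ℝ) : 0 ≤ moment abs n μ :=
  integral_nonneg fun h ↦ pow_nonneg (abs_nonneg h) n

theorem setIntegral_Ici_sub_pow_le_moment_abs {μ : Measure ℝ} {m n : ℕ} {x : ℝ} (hx : 0 < x)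
    (hμ : Integrable (fun h ↦ |h| ^ (m + n)) μ) :
    ∫ h in Set.Ici x, (h - x) ^ m ∂μ ≤ moment abs (m + n) μ / x ^ n := by
  have hpointwise : ∀ h ∈ Set.Ici x, (h - x) ^ m ≤ |h| ^ (m + n) / x ^ n := by
    intro h (hxh : x ≤ h)
    rw [le_div_iff₀ (by positivity), abs_of_pos (hx.trans_le hxh), pow_add]
    have hh : 0 ≤ h := hx.le.trans hxh
    have : 0 ≤ h - x := sub_nonneg.2 hxh
    gcongr
    linarith
  calc ∫ h in Set.Ici x, (h - x) ^ m ∂μ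
      ≤ ∫ h in Set.Ici x, |h| ^ (m + n) / x ^ n ∂μ := by
        refine integral_mono_of_nonneg ?_ (hμ.div_const _).integrableOn
          (ae_restrict_of_forall_mem measurableSet_Ici hpointwise)
        exact ae_restrict_of_forall_mem measurableSet_Ici
          fun h hxh ↦ pow_nonneg (sub_nonneg.2 hxh) m
    _ ≤ ∫ h, |h| ^ (m + n) / x ^ n ∂μ :=
        setIntegral_le_integral (hμ.div_const _) (.of_forall fun h ↦ by positivity)
    _ = moment abs (m + n) μ / x ^ n := integral_div _ _

/-- The truncated second moment `E[(H - x)² 1{H ≥ x}]` of a standard Gaussian `H`, the only part of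
`Dfun` that depends on the peak power. -/
noncomputable def gaussianTailSq (x : ℝ) : ℝ :=
  ∫ h in Set.Ici x, (h - x) ^ 2 ∂stdGaussian

theorem gaussianTailSq_nonneg (x : ℝ) : 0 ≤ gaussianTailSq x :=
  integral_nonneg fun _ ↦ sq_nonneg _

theorem integrable_abs_pow_stdGaussian (n : ℕ) : Integrable (fun h ↦ |h| ^ n) stdGaussian :=
  haveI : IsFiniteMeasure stdGaussian := inferInstanceAs (IsFiniteMeasure (gaussianReal 0 1))
  (memLp_id_gaussianReal n).integrable_norm_pow'

theorem gaussianTailSq_le {x : ℝ} (hx : 0 < x) :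
    gaussianTailSq x ≤ moment abs 4 stdGaussian / x ^ 2 :=
  setIntegral_Ici_sub_pow_le_moment_abs (m := 2) (n := 2) hx (integrable_abs_pow_stdGaussian 4)

theorem div_mul_gaussianTailSq_le {P β τ a : ℝ} (hP : 0 < P) (hβ : 0 ≤ β) (hτ : 0 < τ)
    (ha : 1 / τ ≤ a) :
    β / a * gaussianTailSq (√P * a) ≤ moment abs 4 stdGaussian * τ ^ 3 * β / P := by
  have ha_pos : 0 < a := (one_div_pos.2 hτ).trans_le ha
  have hinv : 1 / a ≤ τ := (one_div_le hτ ha_pos).1 ha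
  have hmoment := moment_abs_nonneg 4 stdGaussian
  calc β / a * gaussianTailSq (√P * a)
      ≤ β / a * (moment abs 4 stdGaussian / (√P * a) ^ 2) := by
        gcongr
        exact gaussianTailSq_le (by positivity)
    _ = moment abs 4 stdGaussian * (1 / a) ^ 3 * β / P := by
        rw [mul_pow, Real.sq_sqrt hP.le]
        field_simp
    _ ≤ moment abs 4 stdGaussian * τ ^ 3 * β / P := by gcongr

end Tail

/-- The pointwise limit of `Dfun δ ρ P lam` as `P → ∞`, obtained by dropping the Gaussian tail
term. At `β = 0` it vanishes, even for `lam = 0` since `0 / 0 = 0`, in agreement with the convention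
`D(0, τ) = 0`. -/
noncomputable def limitObjective (δ ρ lam β τ : ℝ) : ℝ :=
  τ * β * δ / 2 + ρ * β / (2 * τ) - β ^ 2 / 4 - τ / 2 * (β ^ 2 / (β + 2 * lam * τ))

section Comparison

variable {δ ρ P lam β τ : ℝ}

theorem Dfun_eq_limitObjective_add (hlam : 0 ≤ lam) (hβ : 0 < β) (hτ : 0 < τ) :
    Dfun δ ρ P lam β τ = limitObjective δ ρ lam β τ +
      β / (1 / τ + 2 * lam / β) * gaussianTailSq (√P * (1 / τ + 2 * lam / β)) := by
  have hprefactor : β / (1 / τ + 2 * lam / β) = τ * (β ^ 2 / (β + 2 * lam * τ)) := by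
    have : β + 2 * lam * τ ≠ 0 := by positivity
    field_simp
  simp only [Dfun, Yfun, limitObjective, gaussianTailSq, hβ.ne', if_false, hprefactor]
  ring

theorem limitObjective_le_Dfun (hlam : 0 ≤ lam) (hβ : 0 < β) (hτ : 0 < τ) :
    limitObjective δ ρ lam β τ ≤ Dfun δ ρ P lam β τ := by
  rw [Dfun_eq_limitObjective_add hlam hβ hτ]
  have := gaussianTailSq_nonneg (√P * (1 / τ + 2 * lam / β))
  exact le_add_of_nonneg_right (by positivity)

theorem Dfun_le_limitObjective_add (hP : 0 < P) (hlam : 0 ≤ lam) (hβ : 0 ≤ β) (hτ : 0 < τ) :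
    Dfun δ ρ P lam β τ ≤
      limitObjective δ ρ lam β τ + moment abs 4 stdGaussian * τ ^ 3 * β / P := by
  rcases hβ.eq_or_lt with rfl | hβ_pos
  · simp [Dfun, limitObjective]
  · rw [Dfun_eq_limitObjective_add hlam hβ_pos hτ]
    gcongr
    exact div_mul_gaussianTailSq_le hP hβ hτ (le_add_of_nonneg_right (by positivity))

end Comparison

section Growth

variable {δ ρ lam s t β τ : ℝ}

theorem limitObjective_sub_ge_left (hlam : 0 ≤ lam) (hs : 0 < s) (ht : 0 < t) (hβ : 0 ≤ β)
    (hδ : δ = 1 / s + 1 / (1 + lam * s)) (hρ : ρ = t ^ 2 * (δ - 1 / (1 + lam * s) ^ 2)) :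
    (β - 2 * t / s) ^ 2 / 4 ≤
      limitObjective δ ρ lam (2 * t / s) t - limitObjective δ ρ lam β t := by
  have hb : 0 < 2 * t / s := by positivity
  have hratio : 2 * lam * t / (2 * t / s + 2 * lam * t) = lam * s / (1 + lam * s) := by
    have : 2 * t / s + 2 * lam * t = 2 * t * (1 + lam * s) / s := by field_simp
    rw [this]
    field_simp
  have htangent := sq_div_add_tangent_le hb (c := 2 * lam * t) (by positivity) hβ
  rw [hratio] at htangent
  have hstationary : t * δ / 2 + ρ / (2 * t) =
      2 * t / s / 2 + t / 2 * (1 - (lam * s / (1 + lam * s)) ^ 2) := by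
    rw [hρ, hδ]
    field_simp
    ring
  calc (β - 2 * t / s) ^ 2 / 4
      = (t * δ / 2 + ρ / (2 * t)) * (2 * t / s - β) - ((2 * t / s) ^ 2 - β ^ 2) / 4 +
          t / 2 * ((1 - (lam * s / (1 + lam * s)) ^ 2) * (β - 2 * t / s)) := by
        rw [hstationary]
        ring
    _ ≤ (t * δ / 2 + ρ / (2 * t)) * (2 * t / s - β) - ((2 * t / s) ^ 2 - β ^ 2) / 4 +
          t / 2 * (β ^ 2 / (β + 2 * lam * t) -
            (2 * t / s) ^ 2 / (2 * t / s + 2 * lam * t)) := by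
        gcongr
        linarith
    _ = limitObjective δ ρ lam (2 * t / s) t - limitObjective δ ρ lam β t := by
        unfold limitObjective
        ring

theorem limitObjective_sub_ge_right (hlam : 0 ≤ lam) (hs : 0 < s) (ht : 0 < t) (hτ : 0 < τ)
    (hρ : ρ = t ^ 2 * (δ - 1 / (1 + lam * s) ^ 2)) :
    ρ * (τ - t) ^ 2 / (s * t * τ) ≤
      limitObjective δ ρ lam (2 * t / s) τ - limitObjective δ ρ lam (2 * t / s) t := by
  have hgap : limitObjective δ ρ lam (2 * t / s) τ - limitObjective δ ρ lam (2 * t / s) t =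
      ρ * (τ - t) ^ 2 / (s * t * τ) +
        lam * t * (τ - t) ^ 2 / ((t + s * lam * τ) * (1 + lam * s) ^ 2) := by
    have hden_t : 2 * t / s + 2 * lam * t = 2 * t * (1 + lam * s) / s := by field_simp
    have hden_τ : 2 * t / s + 2 * lam * τ = 2 * (t + s * lam * τ) / s := by field_simp
    unfold limitObjective
    rw [hden_t, hden_τ, hρ]
    field_simp
    ring
  rw [hgap]
  exact le_add_of_nonneg_right (by positivity)

end Growth

section Convergence

variable {δ ρ lam s t : ℝ}

theorem IsSaddle.sub_sq_add_sub_sq_le {P β τ : ℝ} (hsad : IsSaddle δ ρ P lam β τ) (hP : 0 < P)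
    (hlam : 0 ≤ lam) (hs : 0 < s) (ht : 0 < t)
    (hδ : δ = 1 / s + 1 / (1 + lam * s)) (hρ : ρ = t ^ 2 * (δ - 1 / (1 + lam * s) ^ 2)) :
    (β - 2 * t / s) ^ 2 / 4 + ρ * (τ - t) ^ 2 / (s * t * τ) ≤
      moment abs 4 stdGaussian * t ^ 3 * β / P := by
  obtain ⟨hβ, hτ, hmax, hmin⟩ := hsad
  have hb : 0 < 2 * t / s := by positivity
  have hsandwich : limitObjective δ ρ lam (2 * t / s) τ ≤
      limitObjective δ ρ lam β t + moment abs 4 stdGaussian * t ^ 3 * β / P :=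
    calc limitObjective δ ρ lam (2 * t / s) τ
        ≤ Dfun δ ρ P lam (2 * t / s) τ := limitObjective_le_Dfun hlam hb hτ
      _ ≤ Dfun δ ρ P lam β τ := hmax _ hb.le
      _ ≤ Dfun δ ρ P lam β t := hmin _ ht
      _ ≤ _ := Dfun_le_limitObjective_add hP hlam hβ ht
  linarith [limitObjective_sub_ge_left hlam hs ht hβ hδ hρ,
    limitObjective_sub_ge_right hlam hs ht hτ hρ]

theorem sub_one_div_one_add_mul_sq_pos (hlam : 0 ≤ lam) (hs : 0 < s)
    (hδ : δ = 1 / s + 1 / (1 + lam * s)) : 0 < δ - 1 / (1 + lam * s) ^ 2 := by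
  have : δ - 1 / (1 + lam * s) ^ 2 = 1 / s + lam * s / (1 + lam * s) ^ 2 := by
    rw [hδ]
    field_simp
    ring
  rw [this]
  positivity

variable {βs τs : ℝ → ℝ}

theorem tendsto_saddle_left (hlam : 0 ≤ lam) (hs : 0 < s) (ht : 0 < t)
    (hδ : δ = 1 / s + 1 / (1 + lam * s)) (hρ : ρ = t ^ 2 * (δ - 1 / (1 + lam * s) ^ 2))
    (hsad : ∀ P, 0 < P → IsSaddle δ ρ P lam (βs P) (τs P)) :
    Tendsto βs atTop (𝓝 (2 * t / s)) := by
  have hε : Tendsto (fun P ↦ 4 * (moment abs 4 stdGaussian * t ^ 3) / P) atTop (𝓝 0) :=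
    tendsto_const_nhds.div_atTop tendsto_id
  refine tendsto_of_sub_sq_le_mul_self hε ?_
  filter_upwards [eventually_gt_atTop 0] with P hP
  have hτ := (hsad P hP).2.1
  have hρ_pos : 0 < ρ :=
    hρ ▸ mul_pos (pow_pos ht 2) (sub_one_div_one_add_mul_sq_pos hlam hs hδ)
  have hτ_term : 0 ≤ ρ * (τs P - t) ^ 2 / (s * t * τs P) := by positivity
  have hestimate := (hsad P hP).sub_sq_add_sub_sq_le hP hlam hs ht hδ hρ
  calc (βs P - 2 * t / s) ^ 2 ≤ 4 * (moment abs 4 stdGaussian * t ^ 3 * βs P / P) := by linarith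
    _ = 4 * (moment abs 4 stdGaussian * t ^ 3) / P * βs P := by ring

theorem tendsto_saddle_right (hlam : 0 ≤ lam) (hs : 0 < s) (ht : 0 < t)
    (hδ : δ = 1 / s + 1 / (1 + lam * s)) (hρ : ρ = t ^ 2 * (δ - 1 / (1 + lam * s) ^ 2))
    (hsad : ∀ P, 0 < P → IsSaddle δ ρ P lam (βs P) (τs P)) :
    Tendsto τs atTop (𝓝 t) := by
  have hρ_pos : 0 < ρ :=
    hρ ▸ mul_pos (pow_pos ht 2) (sub_one_div_one_add_mul_sq_pos hlam hs hδ)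
  have hε : Tendsto (fun P ↦ moment abs 4 stdGaussian * t ^ 3 * (s * t) / ρ * (βs P / P))
      atTop (𝓝 0) := by
    simpa using ((tendsto_saddle_left hlam hs ht hδ hρ hsad).div_atTop tendsto_id).const_mul _
  refine tendsto_of_sub_sq_le_mul_self hε ?_
  filter_upwards [eventually_gt_atTop 0] with P hP
  have hτ := (hsad P hP).2.1
  have hestimate : ρ * (τs P - t) ^ 2 / (s * t * τs P) ≤
      moment abs 4 stdGaussian * t ^ 3 * βs P / P := by
    linarith [(hsad P hP).sub_sq_add_sub_sq_le hP hlam hs ht hδ hρ,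
      sq_nonneg (βs P - 2 * t / s)]
  calc (τs P - t) ^ 2
      = ρ * (τs P - t) ^ 2 / (s * t * τs P) * (s * t * τs P) / ρ := by field_simp
    _ ≤ moment abs 4 stdGaussian * t ^ 3 * βs P / P * (s * t * τs P) / ρ := by gcongr
    _ = moment abs 4 stdGaussian * t ^ 3 * (s * t) / ρ * (βs P / P) * τs P := by ring

/-- For `λ = 0` the equation for `s` reads `s = 1 / (δ - 1)`, which is positive precisely when
`δ > 1`. -/
theorem saddle_point_limit_P_infty_RZF_general (hρ : 0 < ρ) (hlam : 0 ≤ lam) (hs : 0 < s)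
    (hδ : δ = 1 / s + 1 / (1 + lam * s))
    (hsad : ∀ P, 0 < P → IsSaddle δ ρ P lam (βs P) (τs P)) :
    Tendsto τs atTop (𝓝 (√ρ / √(δ - 1 / (1 + lam * s) ^ 2))) ∧
      Tendsto βs atTop (𝓝 (2 * √ρ / (s * √(δ - 1 / (1 + lam * s) ^ 2)))) := by
  have hq := sub_one_div_one_add_mul_sq_pos hlam hs hδ
  set q := δ - 1 / (1 + lam * s) ^ 2
  have ht : 0 < √ρ / √q := by positivity
  have hρ_eq : ρ = (√ρ / √q) ^ 2 * q := by
    rw [div_pow, Real.sq_sqrt hρ.le, Real.sq_sqrt hq.le, div_mul_cancel₀ _ hq.ne']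
  have hb : 2 * √ρ / (s * √q) = 2 * (√ρ / √q) / s := by ring
  rw [hb]
  exact ⟨tendsto_saddle_right hlam hs ht hδ hρ_eq hsad,
    tendsto_saddle_left hlam hs ht hδ hρ_eq hsad⟩

end Convergence

section Root

/-- The positive root of `δ λ s² + (δ - λ - 1) s - 1`, written `s*` in the paper. The division makes
it meaningful only for `δ λ ≠ 0`. -/
noncomputable def rzfRoot (δ lam : ℝ) : ℝ :=
  (√((δ - lam - 1) ^ 2 + 4 * δ * lam) - δ + lam + 1) / (2 * δ * lam)

variable {δ lam : ℝ}

theorem rzfRoot_pos (hδ : 0 < δ) (hlam : 0 < lam) : 0 < rzfRoot δ lam := by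
  have hsqrt : δ - lam - 1 < √((δ - lam - 1) ^ 2 + 4 * δ * lam) :=
    Real.lt_sqrt_of_sq_lt (lt_add_of_pos_right _ (by positivity))
  exact div_pos (by linarith) (by positivity)

theorem rzfRoot_quadratic (hδ : 0 < δ) (hlam : 0 < lam) :
    δ * lam * rzfRoot δ lam ^ 2 + (δ - lam - 1) * rzfRoot δ lam - 1 = 0 := by
  have hdiscrim : discrim (δ * lam) (δ - lam - 1) (-1) =
      √((δ - lam - 1) ^ 2 + 4 * δ * lam) * √((δ - lam - 1) ^ 2 + 4 * δ * lam) := by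
    rw [Real.mul_self_sqrt (by positivity), discrim]
    ring
  have hroot := (quadratic_eq_zero_iff (by positivity) hdiscrim (rzfRoot δ lam)).2
    (.inl (by unfold rzfRoot; ring))
  linarith

theorem eq_one_div_rzfRoot_add (hδ : 0 < δ) (hlam : 0 < lam) :
    δ = 1 / rzfRoot δ lam + 1 / (1 + lam * rzfRoot δ lam) := by
  have hs := rzfRoot_pos hδ hlam
  field_simp
  linarith [rzfRoot_quadratic hδ hlam]

end Root

/-- for `λ > 0`, as `P → ∞`, the saddle point `(β*(P), τ*(P))` converges to the
RZF limits expressed in terms of `s* = (√((δ−λ−1)² + 4δλ) − δ + λ + 1)/(2δλ)`. -/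
theorem saddle_point_limit_P_infty_RZF (δ ρ lam : ℝ)
    (hδ : 0 < δ) (hρ : 0 < ρ) (hlam : 0 < lam)
    (βs τs : ℝ → ℝ)
    (hsad : ∀ P : ℝ, 0 < P → IsSaddle δ ρ P lam (βs P) (τs P)) :
    Tendsto τs atTop
      (nhds (Real.sqrt ρ / Real.sqrt (δ - 1 / (1 + lam *
        ((Real.sqrt ((δ - lam - 1) ^ 2 + 4 * δ * lam) - δ + lam + 1) / (2 * δ * lam))) ^ 2))) ∧
    Tendsto βs atTop
      (nhds (2 * Real.sqrt ρ /
        (((Real.sqrt ((δ - lam - 1) ^ 2 + 4 * δ * lam) - δ + lam + 1) / (2 * δ * lam)) *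
          Real.sqrt (δ - 1 / (1 + lam *
            ((Real.sqrt ((δ - lam - 1) ^ 2 + 4 * δ * lam) - δ + lam + 1) / (2 * δ * lam))) ^ 2)))) :=
  saddle_point_limit_P_infty_RZF_general hρ hlam.le (rzfRoot_pos hδ hlam)
    (eq_one_div_rzfRoot_add hδ hlam) hsad
end

section
/- Assume λ > 0, δ > 0 and P > 0, and for each ρ > 0 let (β*(ρ), τ*(ρ)) be the unique saddle point of max_{β ≥ 0} min_{τ > 0} D(β,τ) with parameter ρ. Let s* = (√((δ − λ − 1)² + 4δλ) − δ + λ + 1)/(2δλ). Then, as ρ → 0⁺, the ratio τ*(ρ)/(√ρ/√(δ − 1/(1 + λ·s*)²)) converges to 1 and the ratio β*(ρ)/(2√ρ/(s*·√(δ − 1/(1 + λ·s*)²))) converges to 1. -/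
open MeasureTheory ProbabilityTheory Filter

/-!
With `W(a) = (E[(H − √P·a)₊²] − 1/2) / a` one has `Y(β, τ) = β · W(α)`, so `D` depends on the
Gaussian only through a function of one variable. Put `s = 2τ/β` and `x = √P·α`, so that
`τα = 1 + λs`. At a saddle point `β > 0`, and the two stationarity conditions become

* `ρ/τ² = δ − k/(1 + λs)²`, where `k = 2α²·deriv W α`,
* `δ − 1/s = c/(1 + λs)`, where `c = α·(α·deriv W α − W(α))`.

Both `k` and `c` are functions of `x` alone that tend to `1` as `x → ∞`, and `s*` solves the second
equation with `c = 1`. Since `k ≤ c` and `0 ≤ c ≤ 1`, the equations give `s ≤ s*` and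
`ρ/τ² ≥ 1/s ≥ 1/s*`. Hence `τ → 0` and `x ≥ √P/τ → ∞` as `ρ → 0⁺`, so `s → s*` and
`ρ/τ² → δ − 1/(1 + λs*)²`.
-/

section ExcessMoments

/-- The `n`-th moment `E[(H − x)₊ⁿ]` of the excess of `H ∼ μ` over the threshold `x`; the
expectation in `Yfun` is the case `n = 2`. For `n = 0` the convention `0 ^ 0 = 1` makes
it the total mass. -/
noncomputable def excessMoment (μ : Measure ℝ) (n : ℕ) (x : ℝ) : ℝ := ∫ h, max (h - x) 0 ^ n ∂μ

variable {μ : Measure ℝ} {n : ℕ} {x : ℝ}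

lemma setIntegral_Ici_sub_pow (hn : n ≠ 0) :
    ∫ h in Set.Ici x, (h - x) ^ n ∂μ = excessMoment μ n x := by
  rw [excessMoment, ← integral_indicator measurableSet_Ici]
  congr 1 with h
  rcases le_or_gt x h with hxh | hhx
  · rw [Set.indicator_of_mem (Set.mem_Ici.2 hxh), max_eq_left (sub_nonneg.2 hxh)]
  · rw [Set.indicator_of_notMem (Set.notMem_Ici.2 hhx), max_eq_right (sub_nonpos.2 hhx.le),
      zero_pow hn]

lemma excessMoment_nonneg : 0 ≤ excessMoment μ n x := integral_nonneg fun _ => by positivity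

lemma integrable_max_sub_pow [IsFiniteMeasure μ] (hμ : MemLp id n μ) (x : ℝ) :
    Integrable (fun h => max (h - x) 0 ^ n) μ := by
  have hexcess : MemLp (fun h => max (h - x) 0) n μ := (hμ.sub (memLp_const x)).pos_part
  simpa [abs_of_nonneg] using hexcess.integrable_norm_pow'

lemma hasDerivAt_max_zero_pow_succ (hn : n ≠ 0) (t : ℝ) :
    HasDerivAt (fun s : ℝ => max s 0 ^ (n + 1)) ((n + 1) * max t 0 ^ n) t := by
  have hpow : HasDerivAt (fun s : ℝ => s ^ (n + 1)) ((n + 1) * t ^ n) t := by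
    simpa using hasDerivAt_pow (n + 1) t
  rcases lt_trichotomy t 0 with ht | rfl | ht
  · rw [max_eq_right ht.le, zero_pow hn, mul_zero]
    refine (hasDerivAt_const t 0).congr_of_eventuallyEq ?_
    filter_upwards [gt_mem_nhds ht] with s hs
    rw [max_eq_right hs.le, zero_pow n.succ_ne_zero]
  · rw [max_self, ← hasDerivWithinAt_univ, ← Set.Iic_union_Ici (a := (0 : ℝ))]
    refine .union ?_ (hpow.hasDerivWithinAt.congr (fun s hs => ?_) (by simp))
    · rw [zero_pow hn, mul_zero]
      refine (hasDerivWithinAt_const 0 _ 0).congr (fun s hs => ?_) (by simp)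
      rw [max_eq_right hs, zero_pow n.succ_ne_zero]
    · rw [max_eq_left hs]
  · rw [max_eq_left ht.le]
    refine hpow.congr_of_eventuallyEq ?_
    filter_upwards [lt_mem_nhds ht] with s hs
    rw [max_eq_left hs.le]

lemma hasDerivAt_excessMoment_succ [IsFiniteMeasure μ] (hn : n ≠ 0)
    (hμ : MemLp id ((n + 1 : ℕ) : ENNReal) μ) (x : ℝ) :
    HasDerivAt (excessMoment μ (n + 1)) (-((n + 1) * excessMoment μ n x)) x := by
  have hμn : MemLp id n μ := hμ.mono_exponent (by exact_mod_cast n.le_succ)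
  have hderiv (h y : ℝ) : HasDerivAt (fun z => max (h - z) 0 ^ (n + 1))
      (-((n + 1) * max (h - y) 0 ^ n)) y := by
    simpa [Function.comp_def] using
      (hasDerivAt_max_zero_pow_succ hn (h - y)).comp y ((hasDerivAt_id y).const_sub h)
  have hbound (h y : ℝ) (hy : y ∈ Set.Ioi (x - 1)) :
      ‖-((n + 1) * max (h - y) 0 ^ n)‖ ≤ (n + 1) * max (h - (x - 1)) 0 ^ n := by
    rw [norm_neg, Real.norm_of_nonneg (by positivity)]
    gcongr
    exact hy.le
  have hD := (hasDerivAt_integral_of_dominated_loc_of_deriv_le (Ioi_mem_nhds (sub_one_lt x))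
    (.of_forall fun y => (integrable_max_sub_pow hμ y).aestronglyMeasurable)
    (integrable_max_sub_pow hμ x)
    ((integrable_max_sub_pow hμn x).const_mul _).neg.aestronglyMeasurable
    (.of_forall hbound) ((integrable_max_sub_pow hμn (x - 1)).const_mul _)
    (.of_forall fun h y _ => hderiv h y)).2
  rwa [integral_neg, integral_const_mul] at hD

lemma two_mul_excessMoment_zero [IsFiniteMeasure μ] [μ.IsNegInvariant] (hn : n ≠ 0)
    (hμ : MemLp id n μ) : 2 * excessMoment μ n 0 = ∫ h, |h| ^ n ∂μ := by
  have hint : Integrable (fun h : ℝ => max h 0 ^ n) μ := by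
    simpa using integrable_max_sub_pow hμ 0
  have hsplit (h : ℝ) : max h 0 ^ n + max (-h) 0 ^ n = |h| ^ n := by
    rcases le_total 0 h with hh | hh
    · simp [hh, hn, abs_of_nonneg]
    · simp [hh, hn, abs_of_nonpos]
  calc 2 * excessMoment μ n 0
      = (∫ h, max h 0 ^ n ∂μ) + ∫ h, max (-h) 0 ^ n ∂μ := by
        rw [integral_neg_eq_self (fun h => max h 0 ^ n) μ, two_mul]
        simp only [excessMoment, sub_zero]
    _ = ∫ h, |h| ^ n ∂μ := by
        rw [← integral_add hint hint.comp_neg]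
        simp only [hsplit]

lemma mul_max_sub_eq (h x : ℝ) :
    h * max (h - x) 0 = max (h - x) 0 ^ 2 + x * max (h - x) 0 ^ 1 := by
  rcases max_cases (h - x) 0 with ⟨hmax, -⟩ | ⟨hmax, -⟩ <;> rw [hmax] <;> ring

lemma mul_max_sub_mem_Icc (hx : 0 ≤ x) (h : ℝ) : h * max (h - x) 0 ∈ Set.Icc 0 (max h 0 ^ 2) := by
  rcases max_cases (h - x) 0 with ⟨hmax, hxh⟩ | ⟨hmax, -⟩ <;> rw [hmax]
  · rw [max_eq_left (by linarith)]
    constructor <;> nlinarith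
  · rw [mul_zero]
    exact ⟨le_rfl, sq_nonneg _⟩

variable [IsFiniteMeasure μ]

lemma integrable_mul_max_sub (hμ : MemLp id 2 μ) (x : ℝ) :
    Integrable (fun h => h * max (h - x) 0) μ := by
  have hμ1 : MemLp id (1 : ℕ) μ := hμ.mono_exponent (by norm_num)
  simp only [mul_max_sub_eq]
  exact (integrable_max_sub_pow (n := 2) hμ x).add ((integrable_max_sub_pow hμ1 x).const_mul x)

lemma excessMoment_two_add_mul (hμ : MemLp id 2 μ) (x : ℝ) :
    excessMoment μ 2 x + x * excessMoment μ 1 x = ∫ h, h * max (h - x) 0 ∂μ := by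
  have hμ1 : MemLp id (1 : ℕ) μ := hμ.mono_exponent (by norm_num)
  simp only [mul_max_sub_eq]
  rw [integral_add (integrable_max_sub_pow (n := 2) hμ x)
    ((integrable_max_sub_pow hμ1 x).const_mul x), integral_const_mul]
  rfl

lemma excessMoment_two_add_mul_le (hμ : MemLp id 2 μ) (hx : 0 ≤ x) :
    excessMoment μ 2 x + x * excessMoment μ 1 x ≤ excessMoment μ 2 0 := by
  rw [excessMoment_two_add_mul hμ, excessMoment]
  refine integral_mono (integrable_mul_max_sub hμ x)
    (integrable_max_sub_pow (n := 2) hμ 0) fun h => ?_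
  simpa using (mul_max_sub_mem_Icc hx h).2

lemma tendsto_excessMoment_two_add_mul (hμ : MemLp id 2 μ) :
    Tendsto (fun x => excessMoment μ 2 x + x * excessMoment μ 1 x) atTop (nhds 0) := by
  simp only [excessMoment_two_add_mul hμ]
  suffices Tendsto (fun x => ∫ h, h * max (h - x) 0 ∂μ) atTop (nhds (∫ _, 0 ∂μ)) by
    simpa only [integral_zero] using this
  refine tendsto_integral_filter_of_dominated_convergence (fun h => max h 0 ^ 2)
    (.of_forall fun x => (integrable_mul_max_sub hμ x).aestronglyMeasurable) ?_
    (by simpa using integrable_max_sub_pow (n := 2) hμ 0) (.of_forall fun h => ?_)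
  · filter_upwards [eventually_ge_atTop 0] with x hx
    refine .of_forall fun h => ?_
    have hmem := mul_max_sub_mem_Icc hx h
    rw [Real.norm_of_nonneg hmem.1]
    exact hmem.2
  · refine tendsto_const_nhds.congr' ?_
    filter_upwards [eventually_ge_atTop h] with x hx
    rw [max_eq_right (sub_nonpos.2 hx), mul_zero]

lemma tendsto_excessMoment_two (hμ : MemLp id 2 μ) :
    Tendsto (excessMoment μ 2) atTop (nhds 0) := by
  refine squeeze_zero' (.of_forall fun _ => excessMoment_nonneg) ?_
    (tendsto_excessMoment_two_add_mul hμ)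
  filter_upwards [eventually_ge_atTop 0] with x hx
  exact le_add_of_nonneg_right (mul_nonneg hx excessMoment_nonneg)

lemma tendsto_mul_excessMoment_one (hμ : MemLp id 2 μ) :
    Tendsto (fun x => x * excessMoment μ 1 x) atTop (nhds 0) := by
  simpa using (tendsto_excessMoment_two_add_mul hμ).sub (tendsto_excessMoment_two hμ)

end ExcessMoments

section CenteredGaussian

variable {v : NNReal}

instance : (gaussianReal 0 v).IsNegInvariant :=
  ⟨by rw [Measure.neg_def, gaussianReal_map_neg, neg_zero]⟩

lemma integral_sq_gaussianReal_zero : ∫ h, h ^ 2 ∂gaussianReal 0 v = v := by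
  have hvar := variance_fun_id_gaussianReal (μ := 0) (v := v)
  rw [variance_eq_integral (by fun_prop)] at hvar
  simpa [integral_id_gaussianReal] using hvar

lemma excessMoment_gaussianReal_two_zero : excessMoment (gaussianReal 0 v) 2 0 = v / 2 := by
  have htwo := two_mul_excessMoment_zero (n := 2) two_ne_zero
    (memLp_id_gaussianReal (μ := 0) (v := v) 2)
  simp only [sq_abs, integral_sq_gaussianReal_zero] at htwo
  linarith

end CenteredGaussian

section Profile

/-- The coefficient `1 − 2 E[(H − x)₊²] − 4x E[(H − x)₊]`, for `H ∼ N(0,1)`, in the slope of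
`gaussianProfile`. -/
noncomputable def slopeFactor (x : ℝ) : ℝ :=
  1 - 2 * excessMoment (gaussianReal 0 1) 2 x - 4 * (x * excessMoment (gaussianReal 0 1) 1 x)

/-- The coefficient `1 − 2 E[(H − x)₊²] − 2x E[(H − x)₊]`, for `H ∼ N(0,1)`, in the intercepts of
the tangents to `gaussianProfile`. -/
noncomputable def interceptFactor (x : ℝ) : ℝ :=
  1 - 2 * (excessMoment (gaussianReal 0 1) 2 x + x * excessMoment (gaussianReal 0 1) 1 x)

/-- The function `W` of one variable with `Y(β, τ) = β · W(α(β, τ))`. -/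
noncomputable def gaussianProfile (P a : ℝ) : ℝ :=
  (excessMoment (gaussianReal 0 1) 2 (Real.sqrt P * a) - 1 / 2) / a

variable {P a x : ℝ}

lemma slopeFactor_le_interceptFactor (hx : 0 ≤ x) : slopeFactor x ≤ interceptFactor x := by
  have hmul : 0 ≤ x * excessMoment (gaussianReal 0 1) 1 x := mul_nonneg hx excessMoment_nonneg
  rw [slopeFactor, interceptFactor]
  linarith

lemma interceptFactor_nonneg (hx : 0 ≤ x) : 0 ≤ interceptFactor x := by
  have hle := excessMoment_two_add_mul_le (memLp_id_gaussianReal (μ := 0) (v := 1) 2) hx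
  rw [excessMoment_gaussianReal_two_zero, NNReal.coe_one] at hle
  rw [interceptFactor]
  linarith

lemma interceptFactor_le_one (hx : 0 ≤ x) : interceptFactor x ≤ 1 := by
  have hmul : 0 ≤ x * excessMoment (gaussianReal 0 1) 1 x := mul_nonneg hx excessMoment_nonneg
  have htwo : 0 ≤ excessMoment (gaussianReal 0 1) 2 x := excessMoment_nonneg
  rw [interceptFactor]
  linarith

lemma tendsto_slopeFactor : Tendsto slopeFactor atTop (nhds 1) := by
  unfold slopeFactor
  have hμ := memLp_id_gaussianReal (μ := 0) (v := 1) 2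
  have hlim := ((tendsto_excessMoment_two hμ).const_mul 2).const_sub 1 |>.sub
    ((tendsto_mul_excessMoment_one hμ).const_mul 4)
  simpa only [mul_zero, sub_zero] using hlim

lemma tendsto_interceptFactor : Tendsto interceptFactor atTop (nhds 1) := by
  unfold interceptFactor
  have hμ := memLp_id_gaussianReal (μ := 0) (v := 1) 2
  have hlim := ((tendsto_excessMoment_two_add_mul hμ).const_mul 2).const_sub 1
  simpa only [mul_zero, sub_zero] using hlim

lemma hasDerivAt_gaussianProfile (ha : a ≠ 0) :
    HasDerivAt (gaussianProfile P) (slopeFactor (Real.sqrt P * a) / (2 * a ^ 2)) a := by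
  have hμ : MemLp id ((1 + 1 : ℕ) : ENNReal) (gaussianReal 0 1) := memLp_id_gaussianReal 2
  have hexcess := (hasDerivAt_excessMoment_succ one_ne_zero hμ (Real.sqrt P * a)).comp a
    ((hasDerivAt_id a).const_mul (Real.sqrt P))
  refine ((hexcess.sub_const (1 / 2)).fun_div (hasDerivAt_id a) ha).congr_deriv ?_
  simp only [slopeFactor, Function.comp_apply, id]
  push_cast
  field_simp
  ring

lemma mul_slope_sub_gaussianProfile (ha : a ≠ 0) :
    a * (slopeFactor (Real.sqrt P * a) / (2 * a ^ 2)) - gaussianProfile P a =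
      interceptFactor (Real.sqrt P * a) / a := by
  rw [slopeFactor, interceptFactor, gaussianProfile]
  field_simp
  ring

lemma neg_one_div_le_gaussianProfile (ha : 0 < a) : -(1 / (2 * a)) ≤ gaussianProfile P a := by
  have hnum : -(1 / 2) ≤ excessMoment (gaussianReal 0 1) 2 (Real.sqrt P * a) - 1 / 2 := by
    linarith [excessMoment_nonneg (μ := gaussianReal 0 1) (n := 2) (x := Real.sqrt P * a)]
  calc -(1 / (2 * a)) = -(1 / 2) / a := by ring
    _ ≤ gaussianProfile P a := div_le_div_of_nonneg_right hnum ha.le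

end Profile

/-- The quantity `α(β, τ) = 1/τ + 2λ/β`. -/
noncomputable def alpha (lam β τ : ℝ) : ℝ := 1 / τ + 2 * lam / β

section Objective

variable {δ ρ P lam β τ : ℝ}

lemma alpha_pos (hlam : 0 ≤ lam) (hβ : 0 < β) (hτ : 0 < τ) : 0 < alpha lam β τ := by
  rw [alpha]
  positivity

lemma tau_mul_alpha (hτ : τ ≠ 0) : τ * alpha lam β τ = 1 + lam * (2 * τ / β) := by
  rw [alpha, mul_add, mul_one_div_cancel hτ]
  ring

lemma Dfun_of_ne_zero (hβ : β ≠ 0) :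
    Dfun δ ρ P lam β τ =
      τ * β * δ / 2 + ρ * β / (2 * τ) - β ^ 2 / 4 + β * gaussianProfile P (alpha lam β τ) := by
  have hY : Yfun P lam β τ = β / alpha lam β τ *
      (excessMoment (gaussianReal 0 1) 2 (Real.sqrt P * alpha lam β τ) - 1 / 2) := by
    rw [← setIntegral_Ici_sub_pow two_ne_zero]
    rfl
  rw [Dfun, if_neg hβ, hY, gaussianProfile]
  ring

lemma hasDerivAt_Dfun_tau (hβ : β ≠ 0) (hτ : τ ≠ 0) (hα : alpha lam β τ ≠ 0) :
    HasDerivAt (fun t => Dfun δ ρ P lam β t)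
      (β / 2 * (δ - (ρ + slopeFactor (Real.sqrt P * alpha lam β τ) / alpha lam β τ ^ 2) / τ ^ 2))
      τ := by
  have hinv := hasDerivAt_inv hτ
  have halpha : HasDerivAt (fun t => alpha lam β t) (-(τ ^ 2)⁻¹) τ := by
    simpa [alpha] using hinv.add_const (2 * lam / β)
  have hlin := (hasDerivAt_id τ).mul_const (β * δ / 2)
  have hW := ((hasDerivAt_gaussianProfile (P := P) hα).comp τ halpha).const_mul β
  have hsum := ((hlin.add (hinv.const_mul (ρ * β / 2))).sub_const (β ^ 2 / 4)).add hW
  refine (hsum.congr_of_eventuallyEq (.of_forall fun t => ?_)).congr_deriv ?_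
  · simp only [Dfun_of_ne_zero hβ, Pi.add_apply, Function.comp_apply, id]
    ring
  · field_simp
    ring

lemma hasDerivAt_Dfun_beta (hβ : β ≠ 0) (hα : alpha lam β τ ≠ 0) :
    HasDerivAt (fun b => Dfun δ ρ P lam b τ)
      (τ * δ / 2 + ρ / (2 * τ) - β / 2 + gaussianProfile P (alpha lam β τ) -
        2 * lam / β * (slopeFactor (Real.sqrt P * alpha lam β τ) / (2 * alpha lam β τ ^ 2))) β := by
  have halpha : HasDerivAt (fun b => alpha lam b τ) (2 * lam * -(β ^ 2)⁻¹) β :=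
    ((hasDerivAt_inv hβ).const_mul (2 * lam)).const_add (1 / τ)
  have hlin := (hasDerivAt_id β).mul_const (τ * δ / 2 + ρ / (2 * τ))
  have hsq := (hasDerivAt_pow 2 β).div_const 4
  have hW := (hasDerivAt_id β).mul ((hasDerivAt_gaussianProfile (P := P) hα).comp β halpha)
  refine (((hlin.sub hsq).add hW).congr_of_eventuallyEq ?_).congr_deriv ?_
  · filter_upwards [isOpen_ne.mem_nhds hβ] with b hb
    simp only [Dfun_of_ne_zero hb, Pi.add_apply, Pi.sub_apply, Pi.mul_apply, Function.comp_apply,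
      id]
    ring
  · simp only [Function.comp_apply, id]
    field_simp
    ring

lemma mul_le_Dfun (hlam : 0 < lam) (hβ : 0 < β) (hτ : 0 < τ) :
    β * (τ * δ / 2 + ρ / (2 * τ) - β * ((1 + 1 / lam) / 4)) ≤ Dfun δ ρ P lam β τ := by
  have hα : 2 * lam / β ≤ alpha lam β τ := le_add_of_nonneg_left (by positivity)
  have hprofile : -(β / (4 * lam)) ≤ gaussianProfile P (alpha lam β τ) :=
    calc -(β / (4 * lam)) = -(1 / (2 * (2 * lam / β))) := by field_simp; norm_num
      _ ≤ -(1 / (2 * alpha lam β τ)) := by gcongr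
      _ ≤ gaussianProfile P (alpha lam β τ) :=
        neg_one_div_le_gaussianProfile (alpha_pos hlam.le hβ hτ)
  calc β * (τ * δ / 2 + ρ / (2 * τ) - β * ((1 + 1 / lam) / 4))
      = τ * β * δ / 2 + ρ * β / (2 * τ) - β ^ 2 / 4 + β * -(β / (4 * lam)) := by ring
    _ ≤ Dfun δ ρ P lam β τ := by
      rw [Dfun_of_ne_zero hβ.ne']
      gcongr

end Objective

/-- The limit `s*` of the ratio `2τ*/β*`: the positive root of `δλs² + (δ − λ − 1)s = 1`. -/
noncomputable def sStar (δ lam : ℝ) : ℝ :=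
  (Real.sqrt ((δ - lam - 1) ^ 2 + 4 * δ * lam) - δ + lam + 1) / (2 * δ * lam)

/-- The limit `δ − 1/(1 + λs*)²` of the ratio `ρ/τ*²`. -/
noncomputable def powerRatioLimit (δ lam : ℝ) : ℝ := δ - 1 / (1 + lam * sStar δ lam) ^ 2

section LimitEquation

variable {δ lam : ℝ}

lemma sStar_pos (hδ : 0 < δ) (hlam : 0 < lam) : 0 < sStar δ lam := by
  have hroot : δ - lam - 1 < Real.sqrt ((δ - lam - 1) ^ 2 + 4 * δ * lam) :=
    Real.lt_sqrt_of_sq_lt (lt_add_of_pos_right _ (by positivity))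
  exact div_pos (by linarith) (by positivity)

lemma sStar_quadratic (hδ : 0 < δ) (hlam : 0 < lam) :
    δ * lam * (sStar δ lam * sStar δ lam) + (δ - lam - 1) * sStar δ lam + -1 = 0 := by
  have hdiscrim : discrim (δ * lam) (δ - lam - 1) (-1) =
      Real.sqrt ((δ - lam - 1) ^ 2 + 4 * δ * lam) *
        Real.sqrt ((δ - lam - 1) ^ 2 + 4 * δ * lam) := by
    rw [Real.mul_self_sqrt (by positivity), discrim]
    ring
  refine (quadratic_eq_zero_iff (mul_pos hδ hlam).ne' hdiscrim _).2 (.inl ?_)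
  rw [sStar]
  ring

lemma sub_one_div_sStar (hδ : 0 < δ) (hlam : 0 < lam) :
    δ - 1 / sStar δ lam = 1 / (1 + lam * sStar δ lam) := by
  have hs := sStar_pos hδ hlam
  field_simp
  linear_combination sStar_quadratic hδ hlam

lemma powerRatioLimit_pos (hδ : 0 < δ) (hlam : 0 < lam) : 0 < powerRatioLimit δ lam := by
  have hs := sStar_pos hδ hlam
  have hone : 1 ≤ 1 + lam * sStar δ lam := le_add_of_nonneg_right (by positivity)
  have hsq : 1 / (1 + lam * sStar δ lam) ^ 2 ≤ 1 / (1 + lam * sStar δ lam) :=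
    one_div_le_one_div_of_le (by positivity) (le_self_pow₀ hone two_ne_zero)
  have hinv : 0 < 1 / sStar δ lam := by positivity
  rw [powerRatioLimit]
  linarith [sub_one_div_sStar hδ hlam]

lemma le_of_sub_one_div_eq {s S c : ℝ} (hlam : 0 ≤ lam) (hS : 0 < S) (hc : c ≤ 1)
    (hs_eq : δ - 1 / s = c / (1 + lam * s)) (hS_eq : δ - 1 / S = 1 / (1 + lam * S)) : s ≤ S := by
  by_contra! hlt
  have hinv : 1 / s < 1 / S := one_div_lt_one_div_of_lt hS hlt
  have hres : c / (1 + lam * s) ≤ 1 / (1 + lam * S) := by gcongr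
  linarith

lemma one_div_le_add_of_sub_one_div_eq {s S c : ℝ} (hlam : 0 ≤ lam) (hs : 0 < s) (hS : 0 < S)
    (hc : c ≤ 1) (hs_eq : δ - 1 / s = c / (1 + lam * s))
    (hS_eq : δ - 1 / S = 1 / (1 + lam * S)) : 1 / s ≤ 1 / S + (1 - c) := by
  have hsS : s ≤ S := le_of_sub_one_div_eq hlam hS hc hs_eq hS_eq
  have hres : 1 / (1 + lam * S) ≤ 1 / (1 + lam * s) := by gcongr
  have herr : (1 - c) / (1 + lam * s) ≤ 1 - c :=
    div_le_self (by linarith) (le_add_of_nonneg_right (by positivity))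
  rw [sub_div] at herr
  linarith

end LimitEquation

namespace IsSaddle

variable {δ ρ P lam β τ : ℝ}

lemma tau_pos (h : IsSaddle δ ρ P lam β τ) : 0 < τ := h.2.1

lemma beta_pos (hδ : 0 < δ) (hlam : 0 < lam) (hρ : 0 ≤ ρ) (h : IsSaddle δ ρ P lam β τ) :
    0 < β := by
  obtain ⟨hβ, hτ, hmax, -⟩ := h
  refine hβ.lt_of_ne fun hβ0 => ?_
  subst hβ0
  set b := τ * δ / (1 + 1 / lam) with hb
  have hb_pos : 0 < b := by positivity
  have hb_mul : b * ((1 + 1 / lam) / 4) = τ * δ / 4 := by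
    rw [hb]
    field_simp
  have hD_pos : 0 < Dfun δ ρ P lam b τ := by
    refine lt_of_lt_of_le ?_ (mul_le_Dfun hlam hb_pos hτ)
    rw [hb_mul]
    have hρτ : 0 ≤ ρ / (2 * τ) := by positivity
    have hτδ : 0 < τ * δ := by positivity
    exact mul_pos hb_pos (by linarith)
  have hD_zero : Dfun δ ρ P lam 0 τ = 0 := if_pos rfl
  exact hD_pos.not_ge (hD_zero ▸ hmax b hb_pos.le)

lemma rho_add_slope_eq (hlam : 0 ≤ lam) (hβ : 0 < β) (h : IsSaddle δ ρ P lam β τ) :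
    ρ + slopeFactor (Real.sqrt P * alpha lam β τ) / alpha lam β τ ^ 2 = δ * τ ^ 2 := by
  obtain ⟨-, hτ, -, hmin⟩ := h
  have hlocal : IsLocalMin (fun t => Dfun δ ρ P lam β t) τ := by
    filter_upwards [lt_mem_nhds hτ] with t ht using hmin t ht
  have hzero := hlocal.hasDerivAt_eq_zero
    (hasDerivAt_Dfun_tau hβ.ne' hτ.ne' (alpha_pos hlam hβ hτ).ne')
  have hdiff := (mul_eq_zero.1 hzero).resolve_left (by positivity)
  exact ((eq_div_iff (by positivity)).1 (sub_eq_zero.1 hdiff)).symm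

lemma rho_div_tau_sq_eq (hlam : 0 ≤ lam) (hβ : 0 < β) (h : IsSaddle δ ρ P lam β τ) :
    ρ / τ ^ 2 =
      δ - slopeFactor (Real.sqrt P * alpha lam β τ) / (1 + lam * (2 * τ / β)) ^ 2 := by
  have hτ := h.tau_pos
  rw [← tau_mul_alpha hτ.ne', eq_sub_iff_add_eq, mul_pow, mul_comm (τ ^ 2), ← div_div, ← add_div,
    h.rho_add_slope_eq hlam hβ, mul_div_cancel_right₀ _ (by positivity)]

lemma delta_sub_one_div_eq (hlam : 0 ≤ lam) (hβ : 0 < β) (h : IsSaddle δ ρ P lam β τ) :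
    δ - 1 / (2 * τ / β) =
      interceptFactor (Real.sqrt P * alpha lam β τ) / (1 + lam * (2 * τ / β)) := by
  have hτ := h.tau_pos
  have hα := alpha_pos hlam hβ hτ
  have hlocal : IsLocalMax (fun b => Dfun δ ρ P lam b τ) β := by
    filter_upwards [lt_mem_nhds hβ] with b hb using h.2.2.1 b hb.le
  have hzero := hlocal.hasDerivAt_eq_zero (hasDerivAt_Dfun_beta hβ.ne' hα.ne')
  have hlamβ : 2 * lam / β = alpha lam β τ - 1 / τ := (add_sub_cancel_left _ _).symm
  have hslope : slopeFactor (Real.sqrt P * alpha lam β τ) / (2 * alpha lam β τ ^ 2) =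
      (δ * τ ^ 2 - ρ) / 2 := by
    rw [← h.rho_add_slope_eq hlam hβ]
    ring
  have hintercept := mul_slope_sub_gaussianProfile (P := P) hα.ne'
  have hcancel : 1 / τ * ((δ * τ ^ 2 - ρ) / 2) = δ * τ / 2 - ρ / (2 * τ) := by field_simp
  rw [hlamβ, hslope] at hzero
  rw [hslope] at hintercept
  have hlinear : δ * τ - β / 2 = interceptFactor (Real.sqrt P * alpha lam β τ) / alpha lam β τ := by
    linear_combination hzero + hintercept - hcancel
  rw [← tau_mul_alpha hτ.ne', mul_comm τ, ← div_div, ← hlinear]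
  field_simp

lemma one_div_ratio_le_rho_div_tau_sq (hlam : 0 ≤ lam) (hβ : 0 < β) (h : IsSaddle δ ρ P lam β τ) :
    1 / (2 * τ / β) ≤ ρ / τ ^ 2 := by
  have hτ := h.tau_pos
  have hα := alpha_pos hlam hβ hτ
  have hx : 0 ≤ Real.sqrt P * alpha lam β τ := by positivity
  have hone : 1 ≤ 1 + lam * (2 * τ / β) := le_add_of_nonneg_right (by positivity)
  have hfactor : slopeFactor (Real.sqrt P * alpha lam β τ) / (1 + lam * (2 * τ / β)) ^ 2 ≤
      interceptFactor (Real.sqrt P * alpha lam β τ) / (1 + lam * (2 * τ / β)) := by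
    gcongr
    · exact interceptFactor_nonneg hx
    · exact slopeFactor_le_interceptFactor hx
    · exact le_self_pow₀ hone two_ne_zero
  rw [h.rho_div_tau_sq_eq hlam hβ]
  linarith [h.delta_sub_one_div_eq hlam hβ]

lemma ratio_le_sStar (hδ : 0 < δ) (hlam : 0 < lam) (hβ : 0 < β) (h : IsSaddle δ ρ P lam β τ) :
    2 * τ / β ≤ sStar δ lam :=
  le_of_sub_one_div_eq hlam.le (sStar_pos hδ hlam)
    (interceptFactor_le_one (mul_nonneg (Real.sqrt_nonneg P) (alpha_pos hlam.le hβ h.tau_pos).le))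
    (h.delta_sub_one_div_eq hlam.le hβ) (sub_one_div_sStar hδ hlam)

lemma one_div_ratio_le_add (hδ : 0 < δ) (hlam : 0 < lam) (hβ : 0 < β)
    (h : IsSaddle δ ρ P lam β τ) :
    1 / (2 * τ / β) ≤
      1 / sStar δ lam + (1 - interceptFactor (Real.sqrt P * alpha lam β τ)) :=
  one_div_le_add_of_sub_one_div_eq hlam.le (div_pos (mul_pos two_pos h.tau_pos) hβ)
    (sStar_pos hδ hlam)
    (interceptFactor_le_one (mul_nonneg (Real.sqrt_nonneg P) (alpha_pos hlam.le hβ h.tau_pos).le))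
    (h.delta_sub_one_div_eq hlam.le hβ) (sub_one_div_sStar hδ hlam)

lemma tau_sq_le (hδ : 0 < δ) (hlam : 0 < lam) (hβ : 0 < β) (h : IsSaddle δ ρ P lam β τ) :
    τ ^ 2 ≤ sStar δ lam * ρ := by
  have hτ := h.tau_pos
  have hs := sStar_pos hδ hlam
  have hle : 1 / sStar δ lam ≤ ρ / τ ^ 2 :=
    (one_div_le_one_div_of_le (by positivity) (h.ratio_le_sStar hδ hlam hβ)).trans
      (h.one_div_ratio_le_rho_div_tau_sq hlam.le hβ)
  rwa [div_le_div_iff₀ hs (by positivity), one_mul, mul_comm ρ] at hle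

end IsSaddle

lemma tendsto_div_sqrt_div_sqrt {ι : Type*} {l : Filter ι} {r t : ι → ℝ} {L : ℝ} (hL : 0 < L)
    (ht : ∀ᶠ i in l, 0 < t i) (hr : ∀ᶠ i in l, 0 < r i)
    (hlim : Tendsto (fun i => r i / t i ^ 2) l (nhds L)) :
    Tendsto (fun i => t i / (Real.sqrt (r i) / Real.sqrt L)) l (nhds 1) := by
  have hsqrt : Tendsto (fun i => Real.sqrt (L / (r i / t i ^ 2))) l (nhds 1) := by
    simpa [div_self hL.ne'] using (tendsto_const_nhds (x := L)).div hlim hL.ne' |>.sqrt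
  refine hsqrt.congr' ?_
  filter_upwards [ht, hr] with i hti hri
  rw [Real.sqrt_div hL.le, Real.sqrt_div hri.le, Real.sqrt_sq hti.le]
  field_simp

section SmallPower

variable {δ P lam : ℝ} {βs τs : ℝ → ℝ}

lemma eventually_saddle_beta_pos (hδ : 0 < δ) (hlam : 0 < lam)
    (hsad : ∀ᶠ ρ in nhdsWithin 0 (Set.Ioi 0), IsSaddle δ ρ P lam (βs ρ) (τs ρ)) :
    ∀ᶠ ρ in nhdsWithin 0 (Set.Ioi 0), 0 < βs ρ := by
  filter_upwards [hsad, self_mem_nhdsWithin] with ρ h hρ using h.beta_pos hδ hlam (le_of_lt hρ)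

lemma tendsto_saddle_tau (hδ : 0 < δ) (hlam : 0 < lam)
    (hsad : ∀ᶠ ρ in nhdsWithin 0 (Set.Ioi 0), IsSaddle δ ρ P lam (βs ρ) (τs ρ)) :
    Tendsto τs (nhdsWithin 0 (Set.Ioi 0)) (nhdsWithin 0 (Set.Ioi 0)) := by
  refine tendsto_nhdsWithin_iff.2 ⟨?_, hsad.mono fun ρ h => h.tau_pos⟩
  have hbound : Tendsto (fun ρ => Real.sqrt (sStar δ lam * ρ)) (nhdsWithin 0 (Set.Ioi 0))
      (nhds 0) := by
    have hcont : Continuous fun ρ => Real.sqrt (sStar δ lam * ρ) := by fun_prop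
    simpa using (hcont.tendsto 0).mono_left nhdsWithin_le_nhds
  refine squeeze_zero' (hsad.mono fun ρ h => h.tau_pos.le) ?_ hbound
  filter_upwards [hsad, eventually_saddle_beta_pos hδ hlam hsad] with ρ h hβ
  exact Real.le_sqrt_of_sq_le (h.tau_sq_le hδ hlam hβ)

lemma tendsto_saddle_threshold (hδ : 0 < δ) (hP : 0 < P) (hlam : 0 < lam)
    (hsad : ∀ᶠ ρ in nhdsWithin 0 (Set.Ioi 0), IsSaddle δ ρ P lam (βs ρ) (τs ρ)) :
    Tendsto (fun ρ => Real.sqrt P * alpha lam (βs ρ) (τs ρ)) (nhdsWithin 0 (Set.Ioi 0)) atTop := by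
  refine Tendsto.const_mul_atTop (Real.sqrt_pos.2 hP) ?_
  refine tendsto_atTop_mono' _ ?_ (tendsto_saddle_tau hδ hlam hsad).inv_tendsto_nhdsGT_zero
  filter_upwards [eventually_saddle_beta_pos hδ hlam hsad] with ρ hβ
  rw [Pi.inv_apply, alpha, one_div]
  exact le_add_of_nonneg_right (by positivity)

lemma tendsto_saddle_ratio (hδ : 0 < δ) (hP : 0 < P) (hlam : 0 < lam)
    (hsad : ∀ᶠ ρ in nhdsWithin 0 (Set.Ioi 0), IsSaddle δ ρ P lam (βs ρ) (τs ρ)) :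
    Tendsto (fun ρ => 2 * τs ρ / βs ρ) (nhdsWithin 0 (Set.Ioi 0)) (nhds (sStar δ lam)) := by
  have hs := sStar_pos hδ hlam
  have hβ := eventually_saddle_beta_pos hδ hlam hsad
  have hupper : Tendsto (fun ρ => 1 / sStar δ lam +
      (1 - interceptFactor (Real.sqrt P * alpha lam (βs ρ) (τs ρ))))
      (nhdsWithin 0 (Set.Ioi 0)) (nhds (1 / sStar δ lam)) := by
    simpa using ((tendsto_interceptFactor.comp
      (tendsto_saddle_threshold hδ hP hlam hsad)).const_sub 1).const_add (1 / sStar δ lam)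
  have hinv : Tendsto (fun ρ => 1 / (2 * τs ρ / βs ρ)) (nhdsWithin 0 (Set.Ioi 0))
      (nhds (1 / sStar δ lam)) := by
    refine tendsto_of_tendsto_of_tendsto_of_le_of_le' tendsto_const_nhds hupper ?_ ?_
    · filter_upwards [hsad, hβ] with ρ h hβ
      exact one_div_le_one_div_of_le (div_pos (mul_pos two_pos h.tau_pos) hβ)
        (h.ratio_le_sStar hδ hlam hβ)
    · filter_upwards [hsad, hβ] with ρ h hβ using h.one_div_ratio_le_add hδ hlam hβ
  simpa using hinv.inv₀ (one_div_pos.2 hs).ne'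

lemma tendsto_saddle_rho_div_tau_sq (hδ : 0 < δ) (hP : 0 < P) (hlam : 0 < lam)
    (hsad : ∀ᶠ ρ in nhdsWithin 0 (Set.Ioi 0), IsSaddle δ ρ P lam (βs ρ) (τs ρ)) :
    Tendsto (fun ρ => ρ / τs ρ ^ 2) (nhdsWithin 0 (Set.Ioi 0))
      (nhds (powerRatioLimit δ lam)) := by
  have hs := sStar_pos hδ hlam
  have hlim := ((tendsto_slopeFactor.comp (tendsto_saddle_threshold hδ hP hlam hsad)).div
    ((((tendsto_saddle_ratio hδ hP hlam hsad).const_mul lam).const_add 1).pow 2)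
    (by positivity)).const_sub δ
  refine hlim.congr' ?_
  filter_upwards [hsad, eventually_saddle_beta_pos hδ hlam hsad] with ρ h hβ
  exact (h.rho_div_tau_sq_eq hlam.le hβ).symm

lemma tendsto_saddle_tau_div (hδ : 0 < δ) (hP : 0 < P) (hlam : 0 < lam)
    (hsad : ∀ᶠ ρ in nhdsWithin 0 (Set.Ioi 0), IsSaddle δ ρ P lam (βs ρ) (τs ρ)) :
    Tendsto (fun ρ => τs ρ / (Real.sqrt ρ / Real.sqrt (powerRatioLimit δ lam)))
      (nhdsWithin 0 (Set.Ioi 0)) (nhds 1) :=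
  tendsto_div_sqrt_div_sqrt (powerRatioLimit_pos hδ hlam) (hsad.mono fun _ h => h.tau_pos)
    self_mem_nhdsWithin (tendsto_saddle_rho_div_tau_sq hδ hP hlam hsad)

lemma tendsto_saddle_beta_div (hδ : 0 < δ) (hP : 0 < P) (hlam : 0 < lam)
    (hsad : ∀ᶠ ρ in nhdsWithin 0 (Set.Ioi 0), IsSaddle δ ρ P lam (βs ρ) (τs ρ)) :
    Tendsto (fun ρ => βs ρ /
        (2 * Real.sqrt ρ / (sStar δ lam * Real.sqrt (powerRatioLimit δ lam))))
      (nhdsWithin 0 (Set.Ioi 0)) (nhds 1) := by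
  have hs := sStar_pos hδ hlam
  have hlim := ((tendsto_const_nhds (x := sStar δ lam)).div (tendsto_saddle_ratio hδ hP hlam hsad)
    hs.ne').mul (tendsto_saddle_tau_div hδ hP hlam hsad)
  rw [div_self hs.ne', mul_one] at hlim
  refine hlim.congr' ?_
  filter_upwards [hsad] with ρ h
  have hτ := h.tau_pos
  rw [Pi.div_apply]
  field_simp

end SmallPower

/-- for `λ > 0`, as `ρ → 0⁺`, `τ*(ρ)` and `β*(ρ)` are asymptotically
equivalent to `√ρ/√(δ − 1/(1+λs*)²)` and `2√ρ/(s*√(δ − 1/(1+λs*)²))` respectively, where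
`s* = (√((δ−λ−1)² + 4δλ) − δ + λ + 1)/(2δλ)`. -/
theorem saddle_point_limit_rho_zero_RZF (δ P lam : ℝ)
    (hδ : 0 < δ) (hP : 0 < P) (hlam : 0 < lam)
    (βs τs : ℝ → ℝ)
    (hsad : ∀ ρ : ℝ, 0 < ρ → IsSaddle δ ρ P lam (βs ρ) (τs ρ)) :
    Tendsto (fun ρ => τs ρ / (Real.sqrt ρ / Real.sqrt (δ - 1 / (1 + lam *
        ((Real.sqrt ((δ - lam - 1) ^ 2 + 4 * δ * lam) - δ + lam + 1) / (2 * δ * lam))) ^ 2)))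
      (nhdsWithin 0 (Set.Ioi 0)) (nhds 1) ∧
    Tendsto (fun ρ => βs ρ / (2 * Real.sqrt ρ /
        (((Real.sqrt ((δ - lam - 1) ^ 2 + 4 * δ * lam) - δ + lam + 1) / (2 * δ * lam)) *
          Real.sqrt (δ - 1 / (1 + lam *
            ((Real.sqrt ((δ - lam - 1) ^ 2 + 4 * δ * lam) - δ + lam + 1) / (2 * δ * lam))) ^ 2))))
      (nhdsWithin 0 (Set.Ioi 0)) (nhds 1) := by
  have hsad' : ∀ᶠ ρ in nhdsWithin 0 (Set.Ioi 0), IsSaddle δ ρ P lam (βs ρ) (τs ρ) :=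
    eventually_nhdsWithin_of_forall hsad
  exact ⟨tendsto_saddle_tau_div hδ hP hlam hsad', tendsto_saddle_beta_div hδ hP hlam hsad'⟩
end
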